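/- Let (J, B) be a pseudo-euclidean Jordan algebra. Then there exist finitely many ideals J₁, …, J_r of J such that J = J₁ ⊕ … ⊕ J_r as vector spaces, with: (i) the restriction of B to each Jᵢ × Jᵢ is nondegenerate; (ii) each Jᵢ, with the restricted bilinear form, contains no nondegenerate ideal other than {0} and Jᵢ itself; (iii) B(Jᵢ, Jⱼ) = {0} whenever i ≠ j. -/

import Mathlib

section OrthogonalDecomposition

variable {K J : Type*} [Field K] [NonUnitalNonAssocCommRing J] [Module K J]

/-- The restriction of `B` to `I × I` is nondegenerate. -/
def NondegenerateOn (B : J →ₗ[K] J →ₗ[K] K) (I : Submodule K J) : Prop :=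
  ∀ a ∈ I, (∀ b ∈ I, B a b = 0) → a = 0

/-- Multiplication by elements of `M` maps `I` into itself. -/
def IsStableUnder (M I : Submodule K J) : Prop :=
  ∀ x ∈ M, ∀ a ∈ I, x * a ∈ I

/-- `M` contains no nondegenerate ideal other than `⊥` and `M`. -/
def IsIrreducibleFor (B : J →ₗ[K] J →ₗ[K] K) (M : Submodule K J) : Prop :=
  ∀ I ≤ M, IsStableUnder M I → NondegenerateOn B I → I = ⊥ ∨ I = M

/-- The elements of `J` that are `B`-orthogonal to `I`. -/
abbrev perp (B : J →ₗ[K] J →ₗ[K] K) (I : Submodule K J) : Submodule K J :=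
  LinearMap.BilinForm.orthogonal B I

variable {B : J →ₗ[K] J →ₗ[K] K} {I M : Submodule K J}

theorem mem_perp {x : J} : x ∈ perp B I ↔ ∀ a ∈ I, B a x = 0 := Iff.rfl

theorem NondegenerateOn.exists_add_perp [FiniteDimensional K J]
    (hsymm : ∀ x y : J, B x y = B y x) (hI : NondegenerateOn B I) (x : J) :
    ∃ a ∈ I, ∃ p ∈ perp B I, x = a + p := by
  let φ : I →ₗ[K] Module.Dual K I := B.domRestrict₁₂ I I
  have hinj : Function.Injective φ := by
    rw [injective_iff_map_eq_zero]
    intro a ha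
    exact Subtype.ext (hI a a.2 fun b hb => LinearMap.congr_fun ha ⟨b, hb⟩)
  have hsurj := (LinearMap.injective_iff_surjective_of_finrank_eq_finrank
    (Subspace.dual_finrank_eq (K := K) (V := I)).symm).1 hinj
  obtain ⟨a, ha⟩ := hsurj ((B x).domRestrict I)
  refine ⟨a, a.2, x - a, fun b hb => ?_, by abel⟩
  have hab : B a b = B x b := LinearMap.congr_fun ha ⟨b, hb⟩
  change B b (x - a) = 0
  rw [map_sub, hsymm b x, hsymm b a, hab, sub_self]

theorem NondegenerateOn.inf_perp [FiniteDimensional K J]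
    (hsymm : ∀ x y : J, B x y = B y x) (hM : NondegenerateOn B M)
    (hI : NondegenerateOn B I) (hIM : I ≤ M) : NondegenerateOn B (M ⊓ perp B I) := by
  rintro a ⟨haM, haI⟩ ha
  refine hM a haM fun b hb => ?_
  obtain ⟨c, hc, p, hp, rfl⟩ := hI.exists_add_perp hsymm b
  have hpM : p ∈ M := by simpa using M.sub_mem hb (hIM hc)
  rw [map_add, hsymm a c, mem_perp.1 haI c hc, ha p ⟨hpM, hp⟩, add_zero]

theorem NondegenerateOn.sup_inf_perp [FiniteDimensional K J]
    (hsymm : ∀ x y : J, B x y = B y x) (hI : NondegenerateOn B I) (hIM : I ≤ M) :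
    I ⊔ M ⊓ perp B I = M := by
  refine le_antisymm (sup_le hIM inf_le_left) fun x hx => ?_
  obtain ⟨c, hc, p, hp, rfl⟩ := hI.exists_add_perp hsymm x
  have hpM : p ∈ M := by simpa using M.sub_mem hx (hIM hc)
  exact Submodule.add_mem_sup hc ⟨hpM, hp⟩

theorem IsStableUnder.perp (hassoc : ∀ x y z : J, B (x * y) z = B x (y * z))
    (hI : IsStableUnder ⊤ I) : IsStableUnder ⊤ (perp B I) := by
  refine fun x _ a ha => mem_perp.2 fun b hb => ?_
  rw [← hassoc, mul_comm]
  exact mem_perp.1 ha _ (hI x trivial b hb)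

theorem IsStableUnder.inf {I' : Submodule K J} (hI : IsStableUnder M I)
    (hI' : IsStableUnder M I') : IsStableUnder M (I ⊓ I') :=
  fun x hx a ha => ⟨hI x hx a ha.1, hI' x hx a ha.2⟩

/-- An ideal of a nondegenerate ideal is an ideal of the whole algebra. -/
theorem IsStableUnder.of_isStableUnder [FiniteDimensional K J]
    (hsymm : ∀ x y : J, B x y = B y x) (hnondeg : ∀ x : J, (∀ y : J, B x y = 0) → x = 0)
    (hassoc : ∀ x y z : J, B (x * y) z = B x (y * z)) (hM : NondegenerateOn B M)
    (hMJ : IsStableUnder ⊤ M) (hIM : I ≤ M) (hI : IsStableUnder M I) :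
    IsStableUnder ⊤ I := by
  intro x _ a ha
  obtain ⟨m, hm, p, hp, rfl⟩ := hM.exists_add_perp hsymm x
  have hpa : p * a = 0 := hnondeg _ fun z => by
    rw [hassoc, hsymm, mul_comm]
    exact mem_perp.1 hp _ (hMJ z trivial a (hIM ha))
  rw [add_mul, hpa, add_zero]
  exact hI m hm a ha

theorem exists_finset_orthogonal_irreducible [FiniteDimensional K J]
    (hsymm : ∀ x y : J, B x y = B y x) (hnondeg : ∀ x : J, (∀ y : J, B x y = 0) → x = 0)
    (hassoc : ∀ x y z : J, B (x * y) z = B x (y * z)) (M : Submodule K J)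
    (hM : NondegenerateOn B M) (hMJ : IsStableUnder ⊤ M) :
    ∃ S : Finset (Submodule K J), S.sup id = M ∧
      (∀ I ∈ S, IsStableUnder ⊤ I ∧ NondegenerateOn B I ∧ IsIrreducibleFor B I) ∧
      ∀ I ∈ S, ∀ I' ∈ S, I ≠ I' → I' ≤ perp B I := by
  classical
  induction M using WellFoundedLT.induction with
  | ind M ih =>
    by_cases hirr : IsIrreducibleFor B M
    · refine ⟨{M}, by simp, by simp [hM, hMJ, hirr], ?_⟩
      simp only [Finset.mem_singleton]
      rintro I rfl I' rfl h
      exact absurd rfl h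
    · simp only [IsIrreducibleFor, not_forall, not_or] at hirr
      obtain ⟨I, hIM, hstab, hI, hbot, htop⟩ := hirr
      have hIJ := hMJ.of_isStableUnder hsymm hnondeg hassoc hM hIM hstab
      have hlt : M ⊓ perp B I < M := by
        refine lt_of_le_of_ne inf_le_left fun h => hbot ((Submodule.eq_bot_iff I).2 fun a ha => ?_)
        exact hI a ha fun b hb => mem_perp.1 (inf_eq_left.1 h (hIM hb)) a ha
      obtain ⟨S, hS, hSirr, hSorth⟩ := ih I (lt_of_le_of_ne hIM htop) hI hIJ
      obtain ⟨T, hT, hTirr, hTorth⟩ := ih (M ⊓ perp B I) hlt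
        (hM.inf_perp hsymm hI hIM) (hMJ.inf (hIJ.perp hassoc))
      have hSle : ∀ A ∈ S, A ≤ I := fun A hA => hS ▸ Finset.le_sup (f := id) hA
      have hTle : ∀ A ∈ T, A ≤ perp B I := fun A hA =>
        (Finset.le_sup (f := id) hA).trans (hT.le.trans inf_le_right)
      refine ⟨S ∪ T, ?_, ?_, ?_⟩
      · rw [Finset.sup_union, hS, hT, hI.sup_inf_perp hsymm hIM]
      · intro A hA
        exact (Finset.mem_union.1 hA).elim (hSirr A) (hTirr A)
      · intro A hA A' hA' hne
        rcases Finset.mem_union.1 hA with hA | hA <;> rcases Finset.mem_union.1 hA' with hA' | hA'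
        · exact hSorth A hA A' hA' hne
        · exact fun x hx a ha => hTle A' hA' hx a (hSle A hA ha)
        · exact fun x hx a ha => (hsymm a x).trans (hTle A hA ha x (hSle A' hA' hx))
        · exact hTorth A hA A' hA' hne

theorem iSupIndep_of_le_perp {ι : Type*} {N : ι → Submodule K J}
    (hN : ∀ i, NondegenerateOn B (N i)) (hsymm : ∀ x y : J, B x y = B y x)
    (horth : ∀ i j, i ≠ j → N j ≤ perp B (N i)) : iSupIndep N := by
  refine fun i => Submodule.disjoint_def.2 fun a ha ha' => hN i a ha fun b hb => ?_
  have hle : ⨆ j, ⨆ (_ : j ≠ i), N j ≤ perp B (N i) :=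
    iSup₂_le fun j hj => horth i j hj.symm
  exact (hsymm a b).trans (hle ha' b hb)

end OrthogonalDecomposition


/-- Every pseudo-euclidean Jordan algebra `(J, B)` decomposes as an orthogonal
direct sum `J = J₁ ⊕ … ⊕ J_r` of nondegenerate `B`-irreducible ideals. -/
theorem pseudoEuclidean_decomposition
    {K : Type*} [Field K] [CharZero K]
    {J : Type*} [NonUnitalNonAssocCommRing J] [Module K J]
    [SMulCommClass K J J] [IsScalarTower K J J] [FiniteDimensional K J]
    (hjordan : ∀ x y : J, (x * y) * (x * x) = x * (y * (x * x)))
    (B : J →ₗ[K] J →ₗ[K] K)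
    (hsymm : ∀ x y : J, B x y = B y x)
    (hnondeg : ∀ x : J, (∀ y : J, B x y = 0) → x = 0)
    (hassoc : ∀ x y z : J, B (x * y) z = B x (y * z)) :
    ∃ (r : ℕ) (Ji : Fin r → Submodule K J),
      -- `J` is the (internal) direct sum of the `Ji`
      DirectSum.IsInternal Ji ∧
      -- each `Ji` is an ideal of `J`
      (∀ i, ∀ x : J, ∀ a ∈ Ji i, x * a ∈ Ji i) ∧
      -- (i) the restriction of `B` to each `Ji × Ji` is nondegenerate
      (∀ i, ∀ a ∈ Ji i, (∀ b ∈ Ji i, B a b = 0) → a = 0) ∧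
      -- (ii) each `Ji` contains no nondegenerate ideal other than `{0}` and `Ji`
      (∀ i, ∀ I : Submodule K J, I ≤ Ji i →
        (∀ x ∈ Ji i, ∀ a ∈ I, x * a ∈ I) →
        (∀ a ∈ I, (∀ b ∈ I, B a b = 0) → a = 0) →
        I = ⊥ ∨ I = Ji i) ∧
      -- (iii) `B(Ji, Jj) = {0}` for `i ≠ j`
      (∀ i j, i ≠ j → ∀ a ∈ Ji i, ∀ b ∈ Ji j, B a b = 0) := by
  obtain ⟨S, hsup, hS, horth⟩ := exists_finset_orthogonal_irreducible hsymm hnondeg hassoc ⊤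
    (fun a _ h => hnondeg a fun b => h b trivial) (fun _ _ _ _ => trivial)
  let e : Fin S.card ≃ S := S.equivFin.symm
  have horth' : ∀ i j, i ≠ j → (e j : Submodule K J) ≤ perp B (e i) := fun i j hij =>
    horth _ (e i).2 _ (e j).2 fun h => hij (e.injective (Subtype.ext h))
  refine ⟨S.card, fun i => e i, ?_, fun i x => (hS _ (e i).2).1 x trivial,
    fun i => (hS _ (e i).2).2.1, fun i => (hS _ (e i).2).2.2,
    fun i j hij a ha b hb => horth' i j hij hb a ha⟩
  refine DirectSum.isInternal_submodule_of_iSupIndep_of_iSup_eq_top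
    (iSupIndep_of_le_perp (fun i => (hS _ (e i).2).2.1) hsymm horth') (top_le_iff.1 ?_)
  rw [← hsup]
  refine Finset.sup_le fun I hI => ?_
  simpa using le_iSup (fun i => (e i : Submodule K J)) (e.symm ⟨I, hI⟩)
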